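/- Compatibility of the tau-function of the elliptic system: let K ≥ 2 and N ≥ 1 be integers, U ⊆ ℂ^{2N} open with coordinates λ = (λ₁,…,λ_{2N}), and suppose given differentiable functions μ : U → ℂ with Im μ > 0 everywhere, γ_m, α_m : U → ℂ and J_m : U → (K×K complex matrices) for 1 ≤ m ≤ 2N, with α_m nowhere vanishing, such that at every point of U and for all m ≠ n: (i) θ_{[00]}(γ_m − γ_n; μ) ≠ 0 and θ_{[AB]}(0; μ) ≠ 0 for all 0 ≤ A,B ≤ K−1 with (A,B) ≠ (0,0); (ii) ∂α_m/∂λ_n = −2·α_m·α_n·ρ'(γ_m − γ_n; μ), where ρ' = ∂_γρ; (iii) ∂J_m/∂λ_n = −α_n·ρ'(γ_m − γ_n; μ)·J_m − α_m·∑_{(A,B)≠(0,0)} (∂_γw_{AB})(γ_m − γ_n; μ)·tr(σ^{AB} J_n)·σ_{AB} − [J_m, ∑_{(A,B)≠(0,0)} w_{AB}(γ_m − γ_n; μ)·tr(σ^{AB} J_n)·σ_{AB}], where the sums run over 0 ≤ A,B ≤ K−1 with (A,B) ≠ (0,0) and [·,·] is the matrix commutator. Then for all m ≠ n, at every point of U,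 ∂/∂λ_n (tr(J_m²)/(2α_m)) = ∂/∂λ_m (tr(J_n²)/(2α_n)), and both are equal to −∑_{(A,B)≠(0,0)} (∂_γw_{AB})(γ_m − γ_n; μ)·tr(σ_{AB} J_m)·tr(σ^{AB} J_n). In particular the equations ∂(log τ)/∂λ_m = tr(J_m²)/(2α_m) defining the tau-function are compatible. -/

import Mathlib

open Complex Filter

/-- Theta function with characteristics `p, q`. -/
noncomputable def Theta (p q : ℝ) (γ μ : ℂ) : ℂ :=
  ∑' m : ℤ, Complex.exp ((Real.pi : ℂ) * Complex.I * μ * ((m : ℂ) + (p : ℂ))^2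
    + 2 * (Real.pi : ℂ) * Complex.I * ((m : ℂ) + (p : ℂ)) * (γ + (q : ℂ)))

/-- The Jacobi theta function `θ₁`. -/
noncomputable def theta1 (γ μ : ℂ) : ℂ := -Theta (1/2) (1/2) γ μ

/-- Logarithmic derivative of `θ₁` in the first argument. -/
noncomputable def rho (γ μ : ℂ) : ℂ := deriv (fun z => theta1 z μ) γ / theta1 γ μ

/-- `θ_{[AB]}`, theta with characteristics `A/K - 1/2`, `1/2 - B/K`. -/
noncomputable def thetaAB (K : ℕ) (A B : ℤ) (γ μ : ℂ) : ℂ :=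
  Theta ((A : ℝ)/(K : ℝ) - 1/2) (1/2 - (B : ℝ)/(K : ℝ)) γ μ

/-- The coefficients `w_{AB}` of the elliptic r-matrix. -/
noncomputable def wAB (K : ℕ) (A B : ℤ) (γ μ : ℂ) : ℂ :=
  thetaAB K A B γ μ * deriv (fun z => thetaAB K 0 0 z μ) 0
    / (thetaAB K A B 0 μ * thetaAB K 0 0 γ μ)

/-- The functions `Z_{AB}`. -/
noncomputable def ZAB (K : ℕ) (A B : ℤ) (γ μ : ℂ) : ℂ :=
  wAB K A B γ μ / (2 * (Real.pi : ℂ) * Complex.I) *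
    (deriv (fun z => thetaAB K A B z μ) γ / thetaAB K A B γ μ
      - deriv (fun z => thetaAB K A B z μ) 0 / thetaAB K A B 0 μ)

/-- `ε = exp(2πi/K)`. -/
noncomputable def epsK (K : ℕ) : ℂ := Complex.exp (2 * (Real.pi : ℂ) * Complex.I / (K : ℂ))

/-- The diagonal matrix `F = diag(1, ε, …, ε^{K-1})`. -/
noncomputable def Fmat (K : ℕ) : Matrix (Fin K) (Fin K) ℂ :=
  Matrix.diagonal (fun i => epsK K ^ (i : ℕ))

/-- The cyclic permutation matrix `H`. -/
def Hmat (K : ℕ) : Matrix (Fin K) (Fin K) ℂ :=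
  Matrix.of fun i j => if (j : ℕ) = ((i : ℕ) + 1) % K then 1 else 0

/-- `σ_{AB} = H^A F^B` (indices taken mod `K`, using `H^K = F^K = 1`). -/
noncomputable def sigmaAB (K : ℕ) (A B : ℤ) : Matrix (Fin K) (Fin K) ℂ :=
  Hmat K ^ ((A % (K : ℤ)).toNat) * Fmat K ^ ((B % (K : ℤ)).toNat)

/-- The dual basis `σ^{AB} = (ε^{-AB}/K)·σ_{-A,-B}`. -/
noncomputable def sigmaDualAB (K : ℕ) (A B : ℤ) : Matrix (Fin K) (Fin K) ℂ :=
  (epsK K ^ (-(A * B)) / (K : ℂ)) • sigmaAB K (-A) (-B)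

open Kronecker in
/-- The elliptic r-matrix. -/
noncomputable def rmat (K : ℕ) (γ μ : ℂ) : Matrix (Fin K × Fin K) (Fin K × Fin K) ℂ :=
  ∑ A ∈ Finset.range K, ∑ B ∈ Finset.range K,
    if A = 0 ∧ B = 0 then 0
    else wAB K A B γ μ • (sigmaAB K A B ⊗ₖ sigmaDualAB K A B)


/-- `tr₂(∑ f_{AB} σ_{AB}⊗σ^{AB} · (I⊗M)) = ∑ f_{AB}·tr(σ^{AB}M)·σ_{AB}`, the
"partial trace in the second factor" building block of the elliptic system. -/
noncomputable def halfTrace (K : ℕ) (f : ℤ → ℤ → ℂ) (M : Matrix (Fin K) (Fin K) ℂ) :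
    Matrix (Fin K) (Fin K) ℂ :=
  ∑ A ∈ Finset.range K, ∑ B ∈ Finset.range K,
    if A = 0 ∧ B = 0 then 0
    else (f A B * Matrix.trace (sigmaDualAB K A B * M)) • sigmaAB K A B

lemma Theta_neg (p q : ℝ) (γ μ : ℂ) : Theta (-p) (-q) (-γ) μ = Theta p q γ μ := by
  unfold Theta
  rw [← (Equiv.neg ℤ).tsum_eq]
  refine tsum_congr fun m => ?_
  congr 1
  simp only [Equiv.neg_apply]
  push_cast
  ring

lemma Theta_shift_p (p q : ℝ) (a : ℤ) (γ μ : ℂ) :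
    Theta (p + a) q γ μ = Theta p q γ μ := by
  unfold Theta
  rw [← (Equiv.addRight a).tsum_eq (fun m : ℤ => Complex.exp ((Real.pi : ℂ) * Complex.I * μ * ((m : ℂ) + (p : ℂ))^2
    + 2 * (Real.pi : ℂ) * Complex.I * ((m : ℂ) + (p : ℂ)) * (γ + (q : ℂ))))]
  refine tsum_congr fun m => ?_
  congr 1
  simp only [Equiv.coe_addRight]
  push_cast
  ring

lemma Theta_shift_q (p q : ℝ) (b : ℤ) (γ μ : ℂ) :
    Theta p (q + b) γ μ = Complex.exp (2 * Real.pi * Complex.I * p * b) * Theta p q γ μ := by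
  unfold Theta
  rw [← tsum_mul_left]
  refine tsum_congr fun m => ?_
  rw [← Complex.exp_add]
  rw [Complex.exp_eq_exp_iff_exists_int]
  refine ⟨m * b, ?_⟩
  push_cast
  ring

lemma thetaAB_neg (K : ℕ) (hK : K ≠ 0) (A B a b : ℤ) (γ μ : ℂ) :
    thetaAB K (-A + K * a) (-B + K * b) (-γ) μ
      = Complex.exp (2 * Real.pi * Complex.I * ((-((A : ℝ) / K - 1 / 2) : ℝ) : ℂ) * ((1 - b : ℤ) : ℂ))
        * thetaAB K A B γ μ := by
  unfold thetaAB
  have hK' : (K : ℝ) ≠ 0 := by exact_mod_cast hK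
  have h1 : (((-A + K * a : ℤ) : ℝ) / K - 1 / 2) = -((A : ℝ) / K - 1 / 2) + ((a - 1 : ℤ) : ℝ) := by
    push_cast; field_simp; ring
  have h2 : (1 / 2 - ((-B + K * b : ℤ) : ℝ) / K) = -(1 / 2 - (B : ℝ) / K) + ((1 - b : ℤ) : ℝ) := by
    push_cast; field_simp; ring
  rw [h1, h2, Theta_shift_p, Theta_shift_q, Theta_neg]

lemma thetaAB_odd (K : ℕ) (hK : K ≠ 0) (γ μ : ℂ) :
    thetaAB K 0 0 (-γ) μ = - thetaAB K 0 0 γ μ := by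
  have h := thetaAB_neg K hK 0 0 0 0 γ μ
  simp only [mul_zero, neg_zero, add_zero] at h
  rw [h]
  have : Complex.exp (2 * Real.pi * Complex.I * ((-(((0 : ℤ) : ℝ) / K - 1 / 2) : ℝ) : ℂ) * ((1 - 0 : ℤ) : ℂ)) = -1 := by
    rw [← Complex.exp_pi_mul_I]
    congr 1
    push_cast
    ring
  rw [this]; ring

lemma wAB_neg (K : ℕ) (hK : K ≠ 0) (A B a b : ℤ) (γ μ : ℂ) :
    wAB K (-A + K * a) (-B + K * b) (-γ) μ = - wAB K A B γ μ := by
  unfold wAB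
  have h0 := thetaAB_neg K hK A B a b 0 μ
  rw [neg_zero] at h0
  rw [thetaAB_neg K hK, h0, thetaAB_odd K hK]
  have hc := Complex.exp_ne_zero (2 * Real.pi * Complex.I * ((-((A : ℝ) / K - 1 / 2) : ℝ) : ℂ) * ((1 - b : ℤ) : ℂ))
  generalize Complex.exp (2 * Real.pi * Complex.I * ((-((A : ℝ) / K - 1 / 2) : ℝ) : ℂ) * ((1 - b : ℤ) : ℂ)) = c at *
  rw [mul_assoc, mul_assoc c, mul_div_mul_left _ _ hc, mul_neg, div_neg]

lemma deriv_wAB_neg (K : ℕ) (hK : K ≠ 0) (A B a b : ℤ) (γ μ : ℂ) :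
    deriv (fun z => wAB K (-A + K * a) (-B + K * b) z μ) (-γ)
      = deriv (fun z => wAB K A B z μ) γ := by
  have h : (fun z => wAB K A B z μ)
      = fun z => - (fun y => wAB K (-A + K * a) (-B + K * b) y μ) (-z) := by
    funext z
    simp only [wAB_neg K hK, neg_neg]
  rw [h, deriv.fun_neg,
    deriv_comp_neg (fun y => wAB K (-A + K * a) (-B + K * b) y μ), neg_neg]

lemma sigmaAB_shift (K : ℕ) (A B a b : ℤ) :
    sigmaAB K (A + K * a) (B + K * b) = sigmaAB K A B := by
  unfold sigmaAB
  simp [Int.add_mul_emod_self_left]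

lemma epsK_zpow (K : ℕ) (hK : K ≠ 0) (n k : ℤ) : epsK K ^ (n + K * k) = epsK K ^ n := by
  have h : epsK K ≠ 0 := Complex.exp_ne_zero _
  have h1 : epsK K ^ K = 1 := by
    unfold epsK
    rw [← Complex.exp_nat_mul, mul_div_cancel₀ _ (by exact_mod_cast hK), Complex.exp_two_pi_mul_I]
  rw [zpow_add₀ h, zpow_mul, zpow_natCast, h1, one_zpow, mul_one]

lemma sigmaDualAB_neg (K : ℕ) (hK : K ≠ 0) (A B a b : ℤ) :
    sigmaDualAB K (-A + K * a) (-B + K * b) = (epsK K ^ (-(A * B)) / (K : ℂ)) • sigmaAB K A B := by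
  unfold sigmaDualAB
  have e1 : -((-A + K * a) * (-B + K * b)) = -(A * B) + K * (A * b + a * B - K * a * b) := by ring
  have e2 : -(-A + K * a) = A + K * (-a) := by ring
  have e3 : -(-B + K * b) = B + K * (-b) := by ring
  rw [e1, e2, e3, epsK_zpow K hK, sigmaAB_shift]

/-- The symmetric summand. -/
noncomputable def tauTerm (K : ℕ) (γ μ : ℂ) (M P : Matrix (Fin K) (Fin K) ℂ) (A B : ℤ) : ℂ :=
  deriv (fun z => wAB K A B z μ) γ * Matrix.trace (sigmaAB K A B * M)
    * Matrix.trace (sigmaDualAB K A B * P)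

lemma tauTerm_neg (K : ℕ) (hK : K ≠ 0) (γ μ : ℂ) (M P : Matrix (Fin K) (Fin K) ℂ) (A B a b : ℤ) :
    tauTerm K (-γ) μ P M (-A + K * a) (-B + K * b) = tauTerm K γ μ M P A B := by
  unfold tauTerm
  rw [deriv_wAB_neg K hK, sigmaDualAB_neg K hK, sigmaAB_shift]
  unfold sigmaDualAB
  simp only [Matrix.smul_mul, Matrix.trace_smul, smul_eq_mul]
  ring

lemma neg_cast_exists (K A : ℕ) (hA : A < K) :
    ∃ a : ℤ, (((K - A) % K : ℕ) : ℤ) = -A + K * a := by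
  refine ⟨1 - (K - A : ℤ) / K, ?_⟩
  rw [Int.natCast_emod, Nat.cast_sub hA.le, Int.emod_def]
  ring

lemma neg_neg_nat (K A : ℕ) (hA : A < K) : (K - (K - A) % K) % K = A := by
  rcases Nat.eq_zero_or_pos A with rfl | h
  · simp
  · rw [Nat.mod_eq_of_lt (show K - A < K by omega), Nat.mod_eq_of_lt (by omega)]; omega

lemma neg_zero_iff (K A : ℕ) (hA : A < K) : (K - A) % K = 0 ↔ A = 0 := by
  rcases Nat.eq_zero_or_pos A with rfl | h
  · simp
  · rw [Nat.mod_eq_of_lt (show K - A < K by omega)]; omega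

lemma tauSum_symm (K : ℕ) (hK : K ≠ 0) (γ μ : ℂ) (M P : Matrix (Fin K) (Fin K) ℂ) :
    (∑ A ∈ Finset.range K, ∑ B ∈ Finset.range K,
      if A = 0 ∧ B = 0 then 0 else tauTerm K γ μ M P A B)
    = ∑ A ∈ Finset.range K, ∑ B ∈ Finset.range K,
      if A = 0 ∧ B = 0 then 0 else tauTerm K (-γ) μ P M A B := by
  have key : ∀ f : ℕ → ℂ, ∑ A ∈ Finset.range K, f A = ∑ A ∈ Finset.range K, f ((K - A) % K) := by
    intro f
    refine Finset.sum_nbij' (fun A => (K - A) % K) (fun A => (K - A) % K) ?_ ?_ ?_ ?_ ?_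
    · intro A _; exact Finset.mem_range.2 (Nat.mod_lt _ (Nat.pos_of_ne_zero hK))
    · intro A _; exact Finset.mem_range.2 (Nat.mod_lt _ (Nat.pos_of_ne_zero hK))
    · intro A hA; exact neg_neg_nat K A (Finset.mem_range.1 hA)
    · intro A hA; exact neg_neg_nat K A (Finset.mem_range.1 hA)
    · intro A hA; simp only [neg_neg_nat K A (Finset.mem_range.1 hA)]
  symm
  rw [key]
  refine Finset.sum_congr rfl fun A hA => ?_
  rw [key]
  refine Finset.sum_congr rfl fun B hB => ?_
  rw [Finset.mem_range] at hA hB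
  simp only [neg_zero_iff K A hA, neg_zero_iff K B hB]
  obtain ⟨a, ha⟩ := neg_cast_exists K A hA
  obtain ⟨b, hb⟩ := neg_cast_exists K B hB
  rw [ha, hb, tauTerm_neg K hK]

lemma trace_halfTrace (K : ℕ) (f : ℤ → ℤ → ℂ) (M P : Matrix (Fin K) (Fin K) ℂ) :
    Matrix.trace (M * halfTrace K f P) = ∑ A ∈ Finset.range K, ∑ B ∈ Finset.range K,
      if A = 0 ∧ B = 0 then 0 else f A B * Matrix.trace (sigmaAB K A B * M)
        * Matrix.trace (sigmaDualAB K A B * P) := by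
  unfold halfTrace
  simp only [Finset.mul_sum, Matrix.trace_sum]
  refine Finset.sum_congr rfl fun A _ => Finset.sum_congr rfl fun B _ => ?_
  split_ifs
  · simp
  · rw [Matrix.mul_smul, Matrix.trace_smul, Matrix.trace_mul_comm M, smul_eq_mul]; ring

lemma hasDerivAt_trace_sq (K : ℕ) (F : ℂ → Matrix (Fin K) (Fin K) ℂ) (F' : Matrix (Fin K) (Fin K) ℂ)
    (t : ℂ) (h : ∀ i j, HasDerivAt (fun s => F s i j) (F' i j) t) :
    HasDerivAt (fun s => Matrix.trace (F s ^ 2)) (2 * Matrix.trace (F t * F')) t := by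
  have h2 : HasDerivAt (fun s => ∑ i, ∑ j, F s i j * F s j i)
      (∑ i, ∑ j, (F' i j * F t j i + F t i j * F' j i)) t :=
    HasDerivAt.fun_sum fun i _ => HasDerivAt.fun_sum fun j _ => (h i j).mul (h j i)
  have e1 : (fun s => Matrix.trace (F s ^ 2)) = fun s => ∑ i, ∑ j, F s i j * F s j i := by
    funext s
    simp [Matrix.trace, pow_two, Matrix.mul_apply]
  have e2 : 2 * Matrix.trace (F t * F') = ∑ i, ∑ j, (F' i j * F t j i + F t i j * F' j i) := by
    have : 2 * Matrix.trace (F t * F') = Matrix.trace (F' * F t) + Matrix.trace (F t * F') := by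
      rw [Matrix.trace_mul_comm F']; ring
    rw [this]
    simp [Matrix.trace, Matrix.mul_apply, Finset.sum_add_distrib]
  rw [e1, e2]
  exact h2

lemma tau_deriv (K : ℕ) (F : ℂ → Matrix (Fin K) (Fin K) ℂ) (α : ℂ → ℂ) (t αn r : ℂ)
    (W V : Matrix (Fin K) (Fin K) ℂ) (hα0 : α t ≠ 0)
    (hα : HasDerivAt α (-2 * α t * αn * r) t)
    (h : ∀ i j, HasDerivAt (fun s => F s i j)
      (((-(αn * r)) • F t - α t • W - (F t * V - V * F t)) i j) t) :
    deriv (fun s => Matrix.trace (F s ^ 2) / (2 * α s)) t = - Matrix.trace (F t * W) := by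
  have h1 := (hasDerivAt_trace_sq K F _ t h).fun_div (hα.const_mul 2) (mul_ne_zero two_ne_zero hα0)
  rw [h1.deriv]
  have e : Matrix.trace (F t * (V * F t)) = Matrix.trace (F t * (F t * V)) := by
    rw [← Matrix.mul_assoc, Matrix.trace_mul_comm]
  simp only [mul_sub, Matrix.trace_sub, Matrix.mul_smul, Matrix.trace_smul, smul_eq_mul, e, pow_two]
  field_simp
  ring

/-- compatibility of the tau-function of the elliptic system:
given differentiable data on an open set `U ⊆ ℂ^{2N}` satisfying the equations
(ii) for `α_m` and (iii) for `J_m` (the nonautonomous elliptic integrable system),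
the partial derivatives `∂/∂λ_n (tr(J_m²)/(2α_m))` are symmetric in `m, n` and equal
to `−∑_{(A,B)≠(0,0)} w'_{AB}(γ_m−γ_n)·tr(σ_{AB}J_m)·tr(σ^{AB}J_n)`; hence the
equations `∂(log τ)/∂λ_m = tr(J_m²)/(2α_m)` defining the tau-function are compatible. -/
theorem tau_function_compatibility (K N : ℕ) (hK : 2 ≤ K) (hN : 1 ≤ N)
    (U : Set (Fin (2 * N) → ℂ)) (hU : IsOpen U)
    (μf : (Fin (2 * N) → ℂ) → ℂ)
    (γf αf : Fin (2 * N) → (Fin (2 * N) → ℂ) → ℂ)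
    (J : Fin (2 * N) → (Fin (2 * N) → ℂ) → Matrix (Fin K) (Fin K) ℂ)
    (hμpos : ∀ x ∈ U, 0 < (μf x).im)
    (hαne : ∀ m, ∀ x ∈ U, αf m x ≠ 0)
    (hdiffμ : ∀ x ∈ U, DifferentiableAt ℂ μf x)
    (hdiffγ : ∀ m, ∀ x ∈ U, DifferentiableAt ℂ (γf m) x)
    (hdiffα : ∀ m, ∀ x ∈ U, DifferentiableAt ℂ (αf m) x)
    (hdiffJ : ∀ m (i j : Fin K), ∀ x ∈ U, DifferentiableAt ℂ (fun y => J m y i j) x)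
    (hth00 : ∀ m n, m ≠ n → ∀ x ∈ U, thetaAB K 0 0 (γf m x - γf n x) (μf x) ≠ 0)
    (hth0 : ∀ x ∈ U, ∀ A B : ℕ, A < K → B < K → ¬(A = 0 ∧ B = 0) →
      thetaAB K A B 0 (μf x) ≠ 0)
    (hαeq : ∀ m n, m ≠ n → ∀ x ∈ U,
      HasDerivAt (fun t => αf m (Function.update x n t))
        (-2 * αf m x * αf n x * deriv (fun z => rho z (μf x)) (γf m x - γf n x))
        (x n))
    (hJeq : ∀ m n, m ≠ n → ∀ x ∈ U, ∀ i j : Fin K,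
      HasDerivAt (fun t => J m (Function.update x n t) i j)
        (((-(αf n x * deriv (fun z => rho z (μf x)) (γf m x - γf n x))) • J m x
          - αf m x •
              halfTrace K (fun A B => deriv (fun z => wAB K A B z (μf x)) (γf m x - γf n x))
                (J n x)
          - (J m x * halfTrace K (fun A B => wAB K A B (γf m x - γf n x) (μf x)) (J n x)
              - halfTrace K (fun A B => wAB K A B (γf m x - γf n x) (μf x)) (J n x)
                * J m x)) i j)
        (x n)) :
    ∀ m n, m ≠ n → ∀ x ∈ U,
      deriv (fun t => Matrix.trace ((J m (Function.update x n t)) ^ 2)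
          / (2 * αf m (Function.update x n t))) (x n)
        = deriv (fun t => Matrix.trace ((J n (Function.update x m t)) ^ 2)
            / (2 * αf n (Function.update x m t))) (x m) ∧
      deriv (fun t => Matrix.trace ((J m (Function.update x n t)) ^ 2)
          / (2 * αf m (Function.update x n t))) (x n)
        = -∑ A ∈ Finset.range K, ∑ B ∈ Finset.range K,
            if A = 0 ∧ B = 0 then 0
            else deriv (fun z => wAB K A B z (μf x)) (γf m x - γf n x)
              * Matrix.trace (sigmaAB K A B * J m x)
              * Matrix.trace (sigmaDualAB K A B * J n x) := by
  have hK0 : K ≠ 0 := by omega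
  have main : ∀ m n, m ≠ n → ∀ x ∈ U,
      deriv (fun t => Matrix.trace ((J m (Function.update x n t)) ^ 2)
          / (2 * αf m (Function.update x n t))) (x n)
        = -∑ A ∈ Finset.range K, ∑ B ∈ Finset.range K,
            if A = 0 ∧ B = 0 then 0
            else tauTerm K (γf m x - γf n x) (μf x) (J m x) (J n x) A B := by
    intro m n hmn x hx
    have h := tau_deriv K (fun t => J m (Function.update x n t))
      (fun t => αf m (Function.update x n t)) (x n) (αf n x)
      (deriv (fun z => rho z (μf x)) (γf m x - γf n x))
      (halfTrace K (fun A B => deriv (fun z => wAB K A B z (μf x)) (γf m x - γf n x)) (J n x))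
      (halfTrace K (fun A B => wAB K A B (γf m x - γf n x) (μf x)) (J n x))
      (by simpa using hαne m x hx)
      (by simpa only [Function.update_eq_self] using hαeq m n hmn x hx)
      (by simpa only [Function.update_eq_self] using hJeq m n hmn x hx)
    rw [h, trace_halfTrace, Function.update_eq_self]
    rfl
  intro m n hmn x hx
  refine ⟨?_, main m n hmn x hx⟩
  rw [main m n hmn x hx, main n m hmn.symm x hx, tauSum_symm K hK0, neg_sub]
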